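/- Let ρ, σ be density matrices and 0 < α < 1. Define Q_α(ρ‖σ) := α ∫₀^∞ γ^{α-1} Tr[σ {ρ > γσ}] dγ and D_α := (log Q_α)/(α-1). Then D_α(ρ‖σ) = (α/(1-α)) · D_{1-α}(σ‖ρ), equivalently Q_α(ρ‖σ) = Q_{1-α}(σ‖ρ). -/

import Mathlib

open MeasureTheory Matrix
open scoped ComplexOrder
noncomputable section

/-- The positive part `(X)₊` of a Hermitian matrix, via continuous functional calculus. -/
def mposPart {n : ℕ} (X : Matrix (Fin n) (Fin n) ℂ) : Matrix (Fin n) (Fin n) ℂ :=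
  cfc (fun x : ℝ => max x 0) X

/-- The spectral projection of a Hermitian matrix onto its strictly positive part,
so that `projPos (A - γ • B)` is the projection `{A > γB}`. -/
def projPos {n : ℕ} (X : Matrix (Fin n) (Fin n) ℂ) : Matrix (Fin n) (Fin n) ℂ :=
  cfc (fun x : ℝ => if 0 < x then (1:ℝ) else 0) X

/-- The spectral projection of a Hermitian matrix onto its nonnegative part,
so that `projNonneg (γ • B - A)` is the projection `{A ≤ γB}`. -/
def projNonneg {n : ℕ} (X : Matrix (Fin n) (Fin n) ℂ) : Matrix (Fin n) (Fin n) ℂ :=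
  cfc (fun x : ℝ => if 0 ≤ x then (1:ℝ) else 0) X

/-- Matrix logarithm via functional calculus. -/
def mlog {n : ℕ} (X : Matrix (Fin n) (Fin n) ℂ) : Matrix (Fin n) (Fin n) ℂ :=
  cfc Real.log X

/-- Real matrix power via functional calculus (`Real.rpow`, so negative powers of
positive semidefinite matrices are taken on the support). -/
def mpow {n : ℕ} (X : Matrix (Fin n) (Fin n) ℂ) (a : ℝ) : Matrix (Fin n) (Fin n) ℂ :=
  cfc (fun x : ℝ => x ^ a) X

/-- The layer-cake quasi Rényi divergence
`Q_α(ρ‖σ) = α ∫₀^∞ γ^{α-1} Tr[σ{ρ > γσ}] dγ`. -/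
def layerQ {n : ℕ} (ρ σ : Matrix (Fin n) (Fin n) ℂ) (a : ℝ) : ℝ :=
  a * ∫ γ in Set.Ioi (0:ℝ), γ ^ (a - 1) * (Matrix.trace (σ * projPos (ρ - γ • σ))).re

/-!
Write `A ∧ B = A - (A - B)₊` for the noncommutative minimum of Hermitian matrices. Since
`Tr (X Q)`, for `0 ≤ Q ≤ 1`, is maximal at `Q = {X > 0}`, the function `t ↦ Tr (ρ ∧ tσ)` is
concave with supergradient `t ↦ Tr[σ {ρ > tσ}]`, so it is the primitive of the latter that
vanishes at `0`. Tonelli's theorem then gives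
`Q_α(ρ‖σ) = α (1 - α) ∫₀^∞ t^(α-2) Tr (ρ ∧ tσ) dt`,
and the skew symmetry is the substitution `t ↦ 1/t`, because `A ∧ B = B ∧ A`.
-/

section Supergradient

/-- `g` selects a supergradient of `F` at every point of the line; such an `F` is concave. -/
def IsSupergradient (F g : ℝ → ℝ) : Prop :=
  ∀ s t, F s ≤ F t + (s - t) * g t

namespace IsSupergradient

variable {F g : ℝ → ℝ}

lemma antitone (h : IsSupergradient F g) : Antitone g := by
  intro s t hst
  rcases hst.eq_or_lt with rfl | hlt
  · rfl
  · nlinarith [h s t, h t s]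

lemma concaveOn (h : IsSupergradient F g) : ConcaveOn ℝ Set.univ F := by
  refine ⟨convex_univ, fun x _ y _ a b ha hb hab ↦ ?_⟩
  set z := a • x + b • y
  have hz : a * (x - z) + b * (y - z) = 0 := by
    linear_combination (-z) * hab
  calc a • F x + b • F y
      ≤ a * (F z + (x - z) * g z) + b * (F z + (y - z) * g z) := by
        simp only [smul_eq_mul]
        gcongr
        exacts [h x z, h y z]
    _ = F z := by linear_combination F z * hab + g z * hz

lemma continuous (h : IsSupergradient F g) : Continuous F :=
  continuousOn_univ.1 (h.concaveOn.continuousOn isOpen_univ)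

lemma hasDerivAt (h : IsSupergradient F g) {t : ℝ} (ht : ContinuousAt g t) :
    HasDerivAt F (g t) t := by
  rw [hasDerivAt_iff_isLittleO, Asymptotics.isLittleO_iff]
  intro c hc
  filter_upwards [Metric.continuousAt_iff'.1 ht c hc] with s hs
  have hbound : |F s - F t - (s - t) * g t| ≤ |(g s - g t) * (s - t)| := by
    rw [abs_of_nonpos (by linarith [h s t])]
    refine le_trans ?_ (neg_le_abs _)
    linarith [h t s]
  calc |F s - F t - (s - t) * g t|
      ≤ |g s - g t| * |s - t| := hbound.trans_eq (abs_mul _ _)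
    _ ≤ c * |s - t| := by gcongr; exact hs.le

lemma intervalIntegrable (h : IsSupergradient F g) (a b : ℝ) :
    IntervalIntegrable g volume a b :=
  h.antitone.intervalIntegrable

lemma intervalIntegral_eq_sub (h : IsSupergradient F g) (a b : ℝ) :
    ∫ t in a..b, g t = F b - F a :=
  integral_eq_of_hasDerivAt_off_countable F g h.antitone.countable_not_continuousAt
    h.continuous.continuousOn (fun _ ht ↦ h.hasDerivAt (not_not.1 ht.2))
    (h.intervalIntegrable a b)

end IsSupergradient

end Supergradient

section RpowIntegral

lemma lintegral_Ici_rpow {p s : ℝ} (hp : 0 < p) (hs : 0 < s) :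
    ∫⁻ t in Set.Ici s, ENNReal.ofReal (t ^ (-p - 1)) = ENNReal.ofReal (s ^ (-p) / p) := by
  rw [setLIntegral_congr Ioi_ae_eq_Ici.symm, ← ofReal_integral_eq_lintegral_ofReal
    (integrableOn_Ioi_rpow_of_lt (by linarith) hs), integral_Ioi_rpow_of_lt (by linarith) hs]
  · rw [sub_add_cancel, neg_div_neg_eq]
  · exact (ae_restrict_iff' measurableSet_Ioi).2
      (.of_forall fun t ht ↦ Real.rpow_nonneg (hs.trans ht).le _)

-- Tonelli, in the form of the layer-cake formula for the measure `t ^ (-p - 1) dt`.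
lemma lintegral_rpow_mul_intervalIntegral {p : ℝ} (hp : 0 < p) {g : ℝ → ℝ}
    (hg : ∀ t > 0, 0 ≤ g t) (hgi : ∀ t > 0, IntervalIntegrable g volume 0 t) :
    ∫⁻ t in Set.Ioi 0, ENNReal.ofReal (t ^ (-p - 1) * ∫ s in (0 : ℝ)..t, g s) =
      ∫⁻ s in Set.Ioi 0, ENNReal.ofReal (s ^ (-p) / p * g s) := by
  set w : ℝ → ENNReal := fun t ↦ ENNReal.ofReal (t ^ (-p - 1))
  have hw : Measurable w := by fun_prop
  set μ : Measure ℝ := (volume.restrict (Set.Ioi 0)).withDensity w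
  have hμ : ∀ s > 0, μ (Set.Ici s) = ENNReal.ofReal (s ^ (-p) / p) := fun s hs ↦ by
    rw [withDensity_apply _ measurableSet_Ici, Measure.restrict_restrict measurableSet_Ici,
      Set.inter_eq_left.2 (Set.Ici_subset_Ioi.2 hs), lintegral_Ici_rpow hp hs]
  have hpos : ∀ᵐ t ∂μ, 0 ≤ t := (withDensity_absolutelyContinuous _ _).ae_le
    ((ae_restrict_mem measurableSet_Ioi).mono fun _ ht ↦ ht.le)
  calc ∫⁻ t in Set.Ioi 0, ENNReal.ofReal (t ^ (-p - 1) * ∫ s in (0 : ℝ)..t, g s)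
      = ∫⁻ t in Set.Ioi 0, w t * ENNReal.ofReal (∫ s in (0 : ℝ)..t, g s) :=
        setLIntegral_congr_fun measurableSet_Ioi fun t ht ↦
          ENNReal.ofReal_mul (Real.rpow_nonneg ht.le _)
    _ = ∫⁻ t, ENNReal.ofReal (∫ s in (0 : ℝ)..t, g s) ∂μ :=
        (lintegral_withDensity_eq_lintegral_mul_non_measurable _ hw
          (.of_forall fun _ ↦ ENNReal.ofReal_lt_top) _).symm
    _ = ∫⁻ s in Set.Ioi 0, μ (Set.Ici s) * ENNReal.ofReal (g s) :=
        lintegral_comp_eq_lintegral_meas_le_mul μ hpos aemeasurable_id hgi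
          ((ae_restrict_mem measurableSet_Ioi).mono hg)
    _ = ∫⁻ s in Set.Ioi 0, ENNReal.ofReal (s ^ (-p) / p * g s) :=
        setLIntegral_congr_fun measurableSet_Ioi fun s hs ↦ by
          have hs : 0 < s := hs
          rw [hμ s hs, ENNReal.ofReal_mul (by positivity)]

lemma integral_rpow_mul_intervalIntegral {p : ℝ} (hp : 0 < p) {g : ℝ → ℝ}
    (hg : ∀ t > 0, 0 ≤ g t) (hgi : ∀ t > 0, IntervalIntegrable g volume 0 t) :
    p * ∫ t in Set.Ioi 0, t ^ (-p - 1) * ∫ s in (0 : ℝ)..t, g s =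
      ∫ t in Set.Ioi 0, t ^ (-p) * g t := by
  set G : ℝ → ℝ := fun t ↦ ∫ s in (0 : ℝ)..t, g s
  have hgm : AEMeasurable g (volume.restrict (Set.Ioi 0)) :=
    aemeasurable_Ioi_of_forall_Ioc fun t ht ↦ (hgi t ht).1.aemeasurable
  have hGm : AEMeasurable G (volume.restrict (Set.Ioi 0)) :=
    aemeasurable_Ioi_of_forall_Ioc fun t ht ↦
      ((intervalIntegral.continuousOn_primitive_interval' (hgi t ht) Set.left_mem_uIcc).mono
        (Set.Ioc_subset_Icc_self.trans Set.Icc_subset_uIcc)).aemeasurable measurableSet_Ioc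
  have hG : ∀ t > 0, 0 ≤ G t := fun t ht ↦ by
    simp only [G, intervalIntegral.integral_of_le ht.le]
    exact setIntegral_nonneg measurableSet_Ioc fun s hs ↦ hg s hs.1
  have hscaled : ∫ t in Set.Ioi 0, t ^ (-p - 1) * G t = ∫ s in Set.Ioi 0, s ^ (-p) / p * g s := by
    rw [integral_eq_lintegral_of_nonneg_ae, integral_eq_lintegral_of_nonneg_ae,
      lintegral_rpow_mul_intervalIntegral hp hg hgi]
    · filter_upwards [ae_restrict_mem measurableSet_Ioi] with s hs
      exact mul_nonneg (div_nonneg (Real.rpow_nonneg (le_of_lt hs) _) hp.le) (hg s hs)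
    · fun_prop
    · filter_upwards [ae_restrict_mem measurableSet_Ioi] with t ht
      exact mul_nonneg (Real.rpow_nonneg (le_of_lt ht) _) (hG t ht)
    · fun_prop
  calc p * ∫ t in Set.Ioi 0, t ^ (-p - 1) * G t
      = p * ∫ s in Set.Ioi 0, s ^ (-p) * g s / p := by
        simp only [hscaled, div_mul_eq_mul_div]
    _ = ∫ s in Set.Ioi 0, s ^ (-p) * g s := by
        rw [integral_div, mul_div_cancel₀ _ hp.ne']

end RpowIntegral

section MatrixOrder

open scoped MatrixOrder

variable {m 𝕜 : Type*} [Fintype m] [RCLike 𝕜]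

lemma trace_mul_nonneg {A B : Matrix m m 𝕜} (hA : 0 ≤ A) (hB : 0 ≤ B) :
    0 ≤ (A * B).trace := by
  classical
  obtain ⟨C, rfl⟩ := CStarAlgebra.nonneg_iff_eq_star_mul_self.1 hB
  rw [← mul_assoc, trace_mul_comm, ← mul_assoc]
  exact (hA.posSemidef.mul_mul_conjTranspose_same C).trace_nonneg

variable [DecidableEq m]

lemma trace_mul_le_trace_posPart {X Q : Matrix m m 𝕜} (hX : X.IsHermitian)
    (hQ₀ : 0 ≤ Q) (hQ₁ : Q ≤ 1) : (X * Q).trace ≤ (X⁺).trace := by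
  have hleft : 0 ≤ ((X⁺ - X) * Q).trace :=
    trace_mul_nonneg (sub_nonneg.2 (CFC.le_posPart hX)) hQ₀
  have hright : 0 ≤ (X⁺ * (1 - Q)).trace :=
    trace_mul_nonneg (CFC.posPart_nonneg X) (sub_nonneg.2 hQ₁)
  rw [sub_mul, trace_sub, sub_nonneg] at hleft
  rw [mul_sub, mul_one, trace_sub, sub_nonneg] at hright
  exact hleft.trans hright

/-- The noncommutative minimum `A ∧ B = A - (A - B)₊` of two Hermitian matrices, which is the
entrywise minimum when `A` and `B` are diagonal. -/
def ncMin (A B : Matrix m m 𝕜) : Matrix m m 𝕜 :=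
  A - (A - B)⁺

lemma ncMin_comm {A B : Matrix m m 𝕜} (hA : A.IsHermitian) (hB : B.IsHermitian) :
    ncMin A B = ncMin B A := by
  have hpos : (A - B)⁺ = A - B + (A - B)⁻ :=
    sub_eq_iff_eq_add.1 (CFC.posPart_sub_negPart _ (hA.sub hB))
  rw [ncMin, ncMin, ← neg_sub A B, CFC.posPart_neg, hpos]
  abel

lemma ncMin_smul {c : ℝ} (hc : 0 ≤ c) (A B : Matrix m m 𝕜) :
    ncMin (c • A) (c • B) = c • ncMin A B := by
  rw [ncMin, ncMin, ← smul_sub, CFC.posPart_smul_of_nonneg hc, smul_sub]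

lemma ncMin_zero_right {A : Matrix m m 𝕜} (hA : 0 ≤ A) : ncMin A 0 = 0 := by
  rw [ncMin, sub_zero, (CFC.posPart_eq_self A).2 hA, sub_self]

lemma ncMin_smul_inv {A B : Matrix m m 𝕜} (hA : A.IsHermitian) (hB : B.IsHermitian)
    {t : ℝ} (ht : 0 < t) : ncMin A (t⁻¹ • B) = t⁻¹ • ncMin B (t • A) := by
  rw [← ncMin_smul (inv_nonneg.2 ht.le), inv_smul_smul₀ ht.ne',
    ncMin_comm hA (hB.smul (IsSelfAdjoint.all _))]

end MatrixOrder

section LayerQ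

open scoped MatrixOrder

variable {n : ℕ} {ρ σ : Matrix (Fin n) (Fin n) ℂ}

lemma projPos_nonneg (X : Matrix (Fin n) (Fin n) ℂ) : 0 ≤ projPos X :=
  cfc_nonneg fun x _ ↦ by positivity

lemma projPos_le_one (X : Matrix (Fin n) (Fin n) ℂ) : projPos X ≤ 1 :=
  cfc_le_one _ _ fun x _ ↦ by split_ifs <;> norm_num

lemma mul_projPos {X : Matrix (Fin n) (Fin n) ℂ} (hX : X.IsHermitian) :
    X * projPos X = X⁺ := by
  have hcont (f : ℝ → ℝ) : ContinuousOn f (spectrum ℝ X) := X.finite_real_spectrum.continuousOn f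
  calc X * projPos X
      = cfc (fun x : ℝ ↦ x * if 0 < x then 1 else 0) X := by
        rw [cfc_mul (fun x ↦ x) _ X (hcont _) (hcont _), cfc_id' ℝ X hX.isSelfAdjoint, projPos]
    _ = cfc (·⁺ : ℝ → ℝ) X := by
        refine cfc_congr fun x _ ↦ ?_
        rcases lt_or_ge 0 x with hx | hx
        · simp [hx, hx.le]
        · simp [hx, hx.not_gt]
    _ = X⁺ := by rw [CFC.posPart_def, cfcₙ_eq_cfc]

lemma isSupergradient_trace_ncMin (hρ : ρ.IsHermitian) (hσ : σ.IsHermitian) :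
    IsSupergradient (fun t ↦ (ncMin ρ (t • σ)).trace.re)
      (fun t ↦ (σ * projPos (ρ - t • σ)).trace.re) := by
  intro s t
  have hherm (r : ℝ) : (ρ - r • σ).IsHermitian := hρ.sub (hσ.smul (IsSelfAdjoint.all r))
  set P := projPos (ρ - t • σ)
  have hopt : ((ρ - s • σ) * P).trace.re ≤ ((ρ - s • σ)⁺).trace.re :=
    (Complex.le_def.1 (trace_mul_le_trace_posPart (hherm s) (projPos_nonneg _)
      (projPos_le_one _))).1
  have hsplit : (ρ - s • σ) * P = (ρ - t • σ)⁺ - (s - t) • (σ * P) := by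
    rw [← mul_projPos (hherm t), ← smul_mul_assoc, ← sub_mul, sub_smul]
    congr 1
    abel
  rw [hsplit] at hopt
  simp only [ncMin, trace_sub, trace_smul, Complex.sub_re, Complex.smul_re, smul_eq_mul] at hopt ⊢
  linarith

lemma layerQ_eq_integral_ncMin (hρ : ρ.PosSemidef) (hσ : σ.PosSemidef) {α : ℝ} (hα : α < 1) :
    layerQ ρ σ α =
      α * ((1 - α) * ∫ t in Set.Ioi (0 : ℝ), t ^ (α - 2) * (ncMin ρ (t • σ)).trace.re) := by
  have hsuper := isSupergradient_trace_ncMin hρ.isHermitian hσ.isHermitian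
  have hprim (t : ℝ) :
      ∫ s in (0 : ℝ)..t, (σ * projPos (ρ - s • σ)).trace.re = (ncMin ρ (t • σ)).trace.re := by
    simp [hsuper.intervalIntegral_eq_sub, ncMin_zero_right hρ.nonneg]
  have hnonneg (t : ℝ) : 0 ≤ (σ * projPos (ρ - t • σ)).trace.re :=
    (Complex.nonneg_iff.1 (trace_mul_nonneg hσ.nonneg (projPos_nonneg _))).1
  have hlayer := integral_rpow_mul_intervalIntegral (sub_pos.2 hα) (fun t _ ↦ hnonneg t)
    (fun t _ ↦ hsuper.intervalIntegrable 0 t)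
  rw [show -(1 - α) - 1 = α - 2 by ring, neg_sub] at hlayer
  simp only [hprim] at hlayer
  rw [hlayer, layerQ]

lemma integral_rpow_mul_trace_ncMin_swap (hρ : ρ.IsHermitian) (hσ : σ.IsHermitian) (α : ℝ) :
    ∫ t in Set.Ioi (0 : ℝ), t ^ (α - 2) * (ncMin ρ (t • σ)).trace.re =
      ∫ t in Set.Ioi (0 : ℝ), t ^ (1 - α - 2) * (ncMin σ (t • ρ)).trace.re := by
  rw [← integral_comp_rpow_Ioi _ (show (-1 : ℝ) ≠ 0 by norm_num)]
  refine setIntegral_congr_fun measurableSet_Ioi fun t ht ↦ ?_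
  have ht : 0 < t := ht
  have hpow : t ^ (-1 - 1 : ℝ) * (t⁻¹ ^ (α - 2) * t⁻¹) = t ^ (1 - α - 2) := by
    rw [← Real.rpow_neg_one t, ← Real.rpow_mul ht.le, ← Real.rpow_add ht, ← Real.rpow_add ht]
    ring_nf
  simp only [Real.rpow_neg_one, ncMin_smul_inv hρ hσ ht, trace_smul, Complex.smul_re, smul_eq_mul,
    abs_neg, abs_one, one_mul]
  rw [← hpow]
  ring

theorem layerQ_skew_symmetry_general (hρ : ρ.PosSemidef) (hσ : σ.PosSemidef) {α : ℝ}
    (hα0 : 0 < α) (hα1 : α < 1) :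
    layerQ ρ σ α = layerQ σ ρ (1 - α) ∧
    Real.log (layerQ ρ σ α) / (α - 1)
      = (α / (1 - α)) * (Real.log (layerQ σ ρ (1 - α)) / ((1 - α) - 1)) := by
  have hQ : layerQ ρ σ α = layerQ σ ρ (1 - α) := by
    rw [layerQ_eq_integral_ncMin hρ hσ hα1, layerQ_eq_integral_ncMin hσ hρ (sub_lt_self 1 hα0),
      integral_rpow_mul_trace_ncMin_swap hρ.isHermitian hσ.isHermitian]
    ring
  refine ⟨hQ, ?_⟩
  have hα : α - 1 ≠ 0 := (sub_neg.2 hα1).ne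
  have hα' : 1 - α ≠ 0 := (sub_pos.2 hα1).ne'
  rw [hQ, sub_sub_cancel_left]
  field_simp
  ring

end LayerQ

/-- for density matrices and `0 < α < 1`, `Q_α(ρ‖σ) = Q_{1-α}(σ‖ρ)`,
equivalently `D_α(ρ‖σ) = (α/(1-α)) D_{1-α}(σ‖ρ)` with `D_α := log Q_α / (α-1)`. -/
theorem layerQ_skew_symmetry {n : ℕ} (ρ σ : Matrix (Fin n) (Fin n) ℂ)
    (hρ : ρ.PosSemidef) (hσ : σ.PosSemidef) (hρ1 : ρ.trace = 1) (hσ1 : σ.trace = 1)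
    (α : ℝ) (hα0 : 0 < α) (hα1 : α < 1) :
    layerQ ρ σ α = layerQ σ ρ (1 - α) ∧
    Real.log (layerQ ρ σ α) / (α - 1)
      = (α / (1 - α)) * (Real.log (layerQ σ ρ (1 - α)) / ((1 - α) - 1)) :=
  layerQ_skew_symmetry_general hρ hσ hα0 hα1
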